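/- There is a constant c > 0 such that for every integer n ≥ 6 there exists a finite simple graph H_n with at most 4n vertices (and at least n vertices) which admits an IC-planar straight-line drawing, but such that every IC-planar straight-line grid drawing of H_n has bounding box of area at least c·n²; that is, if W and H denote the differences between the maximum and minimum x-coordinates, respectively y-coordinates, of the vertex images, then W·H ≥ c·n². Hence quadratic area is worst-case optimal for IC-planar straight-line grid drawings. -/

import Mathlib

/-- The open straight-line segment representing an edge (an unordered pair of
vertices) in a straight-line drawing `ρ`. -/
def edgeSeg {V : Type*} (ρ : V → ℝ × ℝ) : Sym2 V → Set (ℝ × ℝ) :=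
  Sym2.lift ⟨fun u v => openSegment ℝ (ρ u) (ρ v),
    fun u v => openSegment_symm ℝ (ρ u) (ρ v)⟩

/-- Two edges *cross* in the drawing `ρ`: they share no endpoint and
their open segments meet. -/
def Crosses {V : Type*} (ρ : V → ℝ × ℝ) (e f : Sym2 V) : Prop :=
  (∀ v : V, v ∈ e → v ∉ f) ∧ (edgeSeg ρ e ∩ edgeSeg ρ f).Nonempty

/-- `ρ` is a straight-line drawing of the simple graph `G`. -/
structure IsStraightLineDrawing {V : Type*} (G : SimpleGraph V) (ρ : V → ℝ × ℝ) : Prop where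
  inj : Function.Injective ρ
  no_vertex_on_edge : ∀ e ∈ G.edgeSet, ∀ v : V, v ∉ e → ρ v ∉ edgeSeg ρ e
  meet_at_most_once : ∀ e ∈ G.edgeSet, ∀ f ∈ G.edgeSet, (∀ v : V, v ∈ e → v ∉ f) →
    (edgeSeg ρ e ∩ edgeSeg ρ f).Subsingleton

/-- `ρ` is an IC-planar straight-line drawing of `G`: it is a straight-line drawing,
each edge crosses at most one other edge, and the crossed edges form a matching. -/
def IsICPlanarDrawing {V : Type*} (G : SimpleGraph V) (ρ : V → ℝ × ℝ) : Prop :=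
  IsStraightLineDrawing G ρ ∧
  (∀ e ∈ G.edgeSet, ∀ f ∈ G.edgeSet, ∀ g ∈ G.edgeSet,
    Crosses ρ e f → Crosses ρ e g → f = g) ∧
  (∀ e ∈ G.edgeSet, ∀ f ∈ G.edgeSet,
    (∃ e' ∈ G.edgeSet, Crosses ρ e e') → (∃ f' ∈ G.edgeSet, Crosses ρ f f') →
    e ≠ f → ∀ v : V, v ∈ e → v ∉ f)

/-- All vertices are placed at integer coordinates. -/
def IsGridDrawing {V : Type*} (ρ : V → ℝ × ℝ) : Prop :=
  ∀ v : V, ∃ a b : ℤ, ρ v = ((a : ℝ), (b : ℝ))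

/-- `ρ` is a RAC drawing of `G`: any two crossing edges are perpendicular. -/
def IsRACDrawing {V : Type*} (G : SimpleGraph V) (ρ : V → ℝ × ℝ) : Prop :=
  ∀ e ∈ G.edgeSet, ∀ f ∈ G.edgeSet, Crosses ρ e f →
    ∀ a b c d : V, e = s(a, b) → f = s(c, d) →
      ((ρ b).1 - (ρ a).1) * ((ρ d).1 - (ρ c).1)
        + ((ρ b).2 - (ρ a).2) * ((ρ d).2 - (ρ c).2) = 0

/-- Twice the signed area of a triangle. -/
def icD (a b c : ℝ × ℝ) : ℝ := (b.1 - a.1) * (c.2 - a.2) - (b.2 - a.2) * (c.1 - a.1)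

/-- Strictly inside a nondegenerate triangle. -/
def icIn (p a b c : ℝ × ℝ) : Prop :=
  icD a b c ≠ 0 ∧ ∃ α β γ : ℝ, 0 < α ∧ 0 < β ∧ 0 < γ ∧ α + β + γ = 1 ∧
    p = α • a + β • b + γ • c

lemma ic_mem_open (p q x : ℝ × ℝ) (s : ℝ) (h0 : 0 < s) (h1 : s < 1)
    (hx : x = s • p + (1 - s) • q) : x ∈ openSegment ℝ p q :=
  ⟨s, 1 - s, h0, by linarith, by ring, hx.symm⟩

lemma ic_bary (a b c p : ℝ × ℝ) (h : icD a b c ≠ 0) :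
    ∃ α β γ : ℝ, α + β + γ = 1 ∧ p = α • a + β • b + γ • c := by
  refine ⟨icD p b c / icD a b c, icD a p c / icD a b c, icD a b p / icD a b c, ?_, ?_⟩
  · rw [← add_div, ← add_div, div_eq_one_iff_eq h]
    simp only [icD]; ring
  · ext
    · simp only [Prod.fst_add, Prod.smul_fst, smul_eq_mul]
      field_simp
      simp only [icD]; ring
    · simp only [Prod.snd_add, Prod.smul_snd, smul_eq_mul]
      field_simp
      simp only [icD]; ring

lemma ic_bary_unique (a b c : ℝ × ℝ) (h : icD a b c ≠ 0) (α β γ α' β' γ' : ℝ)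
    (h1 : α + β + γ = 1) (h2 : α' + β' + γ' = 1)
    (he : α • a + β • b + γ • c = α' • a + β' • b + γ' • c) :
    α = α' ∧ β = β' ∧ γ = γ' := by
  obtain ⟨a1, a2⟩ := a
  obtain ⟨b1, b2⟩ := b
  obtain ⟨c1, c2⟩ := c
  simp only [icD, Prod.smul_mk, Prod.mk_add_mk, smul_eq_mul, Prod.mk.injEq] at h he
  obtain ⟨e1, e2⟩ := he
  have hα : α = 1 - β - γ := by linarith
  have hα' : α' = 1 - β' - γ' := by linarith
  subst hα hα'
  have k1 : (γ - γ') * ((b1 - a1) * (c2 - a2) - (b2 - a2) * (c1 - a1)) = 0 := by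
    linear_combination (b1 - a1) * e2 - (b2 - a2) * e1
  have k2 : (β - β') * ((b1 - a1) * (c2 - a2) - (b2 - a2) * (c1 - a1)) = 0 := by
    linear_combination (c2 - a2) * e1 - (c1 - a1) * e2
  have := (mul_eq_zero.1 k1).resolve_right h
  have := (mul_eq_zero.1 k2).resolve_right h
  refine ⟨?_, ?_, ?_⟩ <;> linarith

lemma ic_collinear (a b c : ℝ × ℝ) (h : icD a b c = 0) (hab : a ≠ b) (hac : a ≠ c)
    (hbc : b ≠ c) : a ∈ openSegment ℝ b c ∨ b ∈ openSegment ℝ a c ∨ c ∈ openSegment ℝ a b := by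
  have : ∃ t : ℝ, c = a + t • (b - a) := by
    obtain ⟨a1, a2⟩ := a
    obtain ⟨b1, b2⟩ := b
    obtain ⟨c1, c2⟩ := c
    simp only [icD] at h
    by_cases h1 : b1 = a1
    · have h2 : b2 - a2 ≠ 0 := by
        intro h2
        apply hab
        rw [h1, show b2 = a2 by linarith]
      refine ⟨(c2 - a2) / (b2 - a2), ?_⟩
      ext
      · simp; subst h1
        have : (b2 - a2) * (c1 - b1) = 0 := by linear_combination -h
        have := (mul_eq_zero.1 this).resolve_left h2
        simp; linarith
      · simp; field_simp; ring
    · have h2 : b1 - a1 ≠ 0 := sub_ne_zero.2 h1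
      refine ⟨(c1 - a1) / (b1 - a1), ?_⟩
      ext
      · simp; field_simp; ring
      · simp; field_simp; linear_combination h
  obtain ⟨t, rfl⟩ := this
  rcases lt_trichotomy t 0 with ht | ht | ht
  · left
    refine ic_mem_open _ _ _ (-t / (1 - t)) (by apply div_pos <;> linarith)
      (by rw [div_lt_one] <;> linarith) ?_
    have : 1 - t ≠ 0 := by linarith
    ext <;> simp <;> field_simp <;> ring
  · subst ht; simp at hac
  · rcases lt_trichotomy t 1 with h1 | h1 | h1
    · right; right
      refine ic_mem_open _ _ _ (1 - t) (by linarith) (by linarith) ?_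
      ext <;> simp <;> ring
    · subst h1; simp at hbc
    · right; left
      refine ic_mem_open _ _ _ (1 - 1 / t) (by rw [sub_pos, div_lt_one] <;> linarith)
        (by have : 0 < 1 / t := by positivity
            linarith) ?_
      ext <;> simp <;> field_simp <;> ring

/-- A boundary point of a triangle is a corner or on an open side. -/
lemma ic_boundary (a b c r : ℝ × ℝ) (α β γ : ℝ) (h1 : α + β + γ = 1)
    (hα : 0 ≤ α) (hβ : 0 ≤ β) (hγ : 0 ≤ γ) (h0 : α = 0 ∨ β = 0 ∨ γ = 0)
    (hr : r = α • a + β • b + γ • c) :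
    r = a ∨ r = b ∨ r = c ∨ r ∈ openSegment ℝ a b ∨ r ∈ openSegment ℝ a c ∨
      r ∈ openSegment ℝ b c := by
  rcases hα.eq_or_lt with rfl | hα
  · rcases hβ.eq_or_lt with rfl | hβ
    · have : γ = 1 := by linarith
      subst this; simp [hr]
    · rcases hγ.eq_or_lt with rfl | hγ
      · have : β = 1 := by linarith
        subst this; simp [hr]
      · right; right; right; right; right
        exact ⟨β, γ, hβ, hγ, by linarith, by simp [hr]⟩
  · rcases hβ.eq_or_lt with rfl | hβ
    · rcases hγ.eq_or_lt with rfl | hγ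
      · have : α = 1 := by linarith
        subst this; simp [hr]
      · right; right; right; right; left
        exact ⟨α, γ, hα, hγ, by linarith, by simp [hr]⟩
    · have : γ = 0 := by
        rcases h0 with h | h | h
        · linarith
        · linarith
        · exact h
      subst this
      right; right; right; left
      exact ⟨α, β, hα, hβ, by linarith, by simp [hr]⟩

section planar
variable {ι : Type*} (P : ι → ℝ × ℝ) (adj : ι → ι → Prop)

/-- Planar straight-line drawing hypotheses. -/
structure icPlanar : Prop where
  symm : ∀ a b, adj a b → adj b a
  ne : ∀ a b, adj a b → a ≠ b
  inj : Function.Injective P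
  nv : ∀ a b v, adj a b → v ≠ a → v ≠ b → P v ∉ openSegment ℝ (P a) (P b)
  nc : ∀ a b c d, adj a b → adj c d → a ≠ c → a ≠ d → b ≠ c → b ≠ d →
    ∀ x, x ∈ openSegment ℝ (P a) (P b) → x ∉ openSegment ℝ (P c) (P d)

variable {P adj}

lemma icPlanar.nondeg (H : icPlanar P adj) {a b c : ι} (ab : adj a b) (ac : adj a c)
    (bc : adj b c) : icD (P a) (P b) (P c) ≠ 0 := by
  intro h
  have hab := H.ne _ _ ab
  have hac := H.ne _ _ ac
  have hbc := H.ne _ _ bc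
  rcases ic_collinear _ _ _ h (H.inj.ne hab) (H.inj.ne hac) (H.inj.ne hbc) with h | h | h
  · exact H.nv _ _ _ bc hab hac h
  · exact H.nv _ _ _ ac hab.symm hbc h
  · exact H.nv _ _ _ ab hac.symm hbc.symm h

/-- If the coordinate of `c` is negative, one of the other two is too. -/
lemma icPlanar.cone_aux (H : icPlanar P adj) {a b c p : ι} (ab : adj a b)
    (ac : adj a c) (bc : adj b c) (pc : adj p c) (hpa : p ≠ a) (hpb : p ≠ b)
    {α β γ : ℝ} (h1 : α + β + γ = 1) (hp : P p = α • P a + β • P b + γ • P c) (hγ : γ < 0) :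
    α < 0 ∨ β < 0 := by
  by_contra! hcon
  obtain ⟨hα, hβ⟩ := hcon
  have hg : 1 - γ ≠ 0 := by linarith
  have key : (α / (1 - γ)) • P a + (β / (1 - γ)) • P b ∈ openSegment ℝ (P p) (P c) := by
    refine ic_mem_open _ _ _ (1 / (1 - γ)) (by apply div_pos <;> linarith)
      (by rw [div_lt_one] <;> linarith) ?_
    rw [hp]
    ext <;> simp <;> field_simp <;> ring
  have hac := H.ne _ _ ac
  have hbc := H.ne _ _ bc
  rcases hα.eq_or_lt with rfl | hα
  · have hb : β / (1 - γ) = 1 := by rw [div_eq_one_iff_eq hg]; linarith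
    rw [hb] at key
    simp at key
    exact H.nv _ _ _ pc hpb.symm hbc key
  rcases hβ.eq_or_lt with rfl | hβ
  · have hb : α / (1 - γ) = 1 := by rw [div_eq_one_iff_eq hg]; linarith
    rw [hb] at key
    simp at key
    exact H.nv _ _ _ pc hpa.symm hac key
  refine H.nc _ _ _ _ pc ab hpa hpb hac.symm hbc.symm _ key ?_
  refine ⟨α / (1 - γ), β / (1 - γ), by apply div_pos <;> linarith, by apply div_pos <;> linarith,
    ?_, rfl⟩
  field_simp; linarith

/-- A hub outside lies in one of the three vertex cones. -/
lemma icPlanar.cone (H : icPlanar P adj) {a b c p : ι} (ab : adj a b)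
    (ac : adj a c) (bc : adj b c) (pa : adj p a) (pb : adj p b) (pc : adj p c)
    (hout : ¬ icIn (P p) (P a) (P b) (P c)) :
    ∃ α β γ : ℝ, α + β + γ = 1 ∧ P p = α • P a + β • P b + γ • P c ∧
      ((α < 0 ∧ β < 0) ∨ (α < 0 ∧ γ < 0) ∨ (β < 0 ∧ γ < 0)) := by
  have hD := H.nondeg ab ac bc
  obtain ⟨α, β, γ, h1, hp⟩ := ic_bary _ _ _ (P p) hD
  refine ⟨α, β, γ, h1, hp, ?_⟩
  have npa := H.ne _ _ pa
  have npb := H.ne _ _ pb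
  have npc := H.ne _ _ pc
  have ba := H.symm _ _ ab
  have ca := H.symm _ _ ac
  have cb := H.symm _ _ bc
  have k1 := H.cone_aux ab ac bc pc npa npb h1 hp
  have k2 := H.cone_aux (α := α) (β := γ) (γ := β) ac ab cb pb npa npc (by linarith)
    (by rw [hp]; abel)
  have k3 := H.cone_aux (α := β) (β := γ) (γ := α) bc ba ca pa npb npc (by linarith)
    (by rw [hp]; abel)
  by_cases hα : α < 0
  · rcases k3 hα with h | h
    · exact Or.inl ⟨hα, h⟩
    · exact Or.inr (Or.inl ⟨hα, h⟩)
  by_cases hβ : β < 0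
  · rcases k2 hβ with h | h
    · exact absurd h hα
    · exact Or.inr (Or.inr ⟨hβ, h⟩)
  by_cases hγ : γ < 0
  · rcases k1 hγ with h | h
    · exact absurd h hα
    · exact absurd h hβ
  exfalso
  push Not at hα hβ hγ
  have hb : α = 0 ∨ β = 0 ∨ γ = 0 := by
    by_contra! hc
    exact hout ⟨hD, α, β, γ, lt_of_le_of_ne hα hc.1.symm, lt_of_le_of_ne hβ hc.2.1.symm,
      lt_of_le_of_ne hγ hc.2.2.symm, h1, hp⟩
  rcases ic_boundary _ _ _ _ _ _ _ h1 hα hβ hγ hb hp with h | h | h | h | h | h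
  · exact npa (H.inj h)
  · exact npb (H.inj h)
  · exact npc (H.inj h)
  · exact H.nv _ _ _ ab npa npb h
  · exact H.nv _ _ _ ac npa npc h
  · exact H.nv _ _ _ bc npb npc h

/-- Hubs in different cones: contradiction. -/
lemma icPlanar.diff_cone (H : icPlanar P adj) {a b c p q : ι} 
    (ac : adj a c) (pa : adj p a) (pc : adj p c)
    (qa : adj q a) (qc : adj q c) (hpq : p ≠ q)
    {α β γ α' β' γ' : ℝ} (h1 : α + β + γ = 1) (hp : P p = α • P a + β • P b + γ • P c)
    (h1' : α' + β' + γ' = 1) (hq : P q = α' • P a + β' • P b + γ' • P c)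
    (hα : α < 0) (hβ : β < 0) (hβ' : β' < 0) (hγ' : γ' < 0) : False := by
  have hac := H.ne _ _ ac
  have npc := H.ne _ _ pc
  have nqa := H.ne _ _ qa
  have hγ : 1 < γ := by linarith
  set d := β' * γ - β * γ' + β with hd
  have m1 : β' * γ < β' := by nlinarith
  have m2 : 0 < β * γ' := by nlinarith
  have hdn : d < 0 := by linarith
  have hd0 : d ≠ 0 := hdn.ne
  have e1 : (β' / d) • P p + (1 - β' / d) • P a ∈ openSegment ℝ (P p) (P a) := by
    refine ic_mem_open _ _ _ (β' / d) (div_pos_of_neg_of_neg hβ' hdn) ?_ rfl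
    rw [div_lt_one_of_neg hdn]; linarith
  refine H.nc _ _ _ _ pa qc hpq npc nqa.symm hac _ e1 ?_
  refine ic_mem_open _ _ _ (β / d) (div_pos_of_neg_of_neg hβ hdn) ?_ ?_
  · rw [div_lt_one_of_neg hdn]; linarith
  · have hα2 : α = 1 - β - γ := by linarith
    have hα2' : α' = 1 - β' - γ' := by linarith
    rw [hp, hq, hα2, hα2']
    ext <;> simp <;> field_simp <;> rw [hd] <;> ring

/-- Hubs in the same cone, oriented version of the crossing. -/
lemma icPlanar.same_cone_aux (H : icPlanar P adj) {a b c p q : ι} 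
    (ac : adj a c) (pa : adj p a) (pc : adj p c)
    (qa : adj q a) (qc : adj q c) (hpq : p ≠ q)
    {α β γ α' β' γ' : ℝ} (h1 : α + β + γ = 1) (hp : P p = α • P a + β • P b + γ • P c)
    (h1' : α' + β' + γ' = 1) (hq : P q = α' • P a + β' • P b + γ' • P c)
    (hβ : β < 0) (hβ' : β' < 0) 
    (hΔ : 0 < α * β' - α' * β) : α * β' - α' * β < β' - β := by
  have hac := H.ne _ _ ac
  have npc := H.ne _ _ pc
  have nqa := H.ne _ _ qa
  set d := α * β' - α' * β - β' with hd
  have hdp : 0 < d := by linarith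
  have hd0 : d ≠ 0 := hdp.ne'
  have e1 : (-β' / d) • P p + (1 - -β' / d) • P a ∈ openSegment ℝ (P p) (P a) := by
    refine ic_mem_open _ _ _ _ (div_pos (by linarith) hdp) ?_ rfl
    rw [div_lt_one hdp]; linarith
  have e2 : (-β' / d) • P p + (1 - -β' / d) • P a = (-β / d) • P q + (1 - -β / d) • P c := by
    have hγ2 : γ = 1 - α - β := by linarith
    have hγ2' : γ' = 1 - α' - β' := by linarith
    rw [hp, hq, hγ2, hγ2']
    ext <;> simp <;> field_simp <;> rw [hd] <;> ring
  rw [e2] at e1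
  rcases lt_trichotomy (-β) d with h | h | h
  · exfalso
    refine H.nc _ _ _ _ pa qc hpq npc nqa.symm hac _ e1 ?_
    refine ic_mem_open _ _ _ (-β / d) (div_pos (by linarith) hdp) ?_ rfl
    rwa [div_lt_one hdp]
  · exfalso
    rw [h, div_self hd0] at e1
    simp at e1
    exact H.nv _ _ _ pa hpq.symm nqa e1
  · linarith

lemma icPlanar.same_cone (H : icPlanar P adj) {a b c p q : ι} 
    (ac : adj a c) (bc : adj b c) (pa : adj p a) (pb : adj p b) (pc : adj p c)
    (qa : adj q a) (qb : adj q b) (qc : adj q c) (hpq : p ≠ q)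
    {α β γ α' β' γ' : ℝ} (h1 : α + β + γ = 1) (hp : P p = α • P a + β • P b + γ • P c)
    (h1' : α' + β' + γ' = 1) (hq : P q = α' • P a + β' • P b + γ' • P c)
    (hα : α < 0) (hβ : β < 0) (hα' : α' < 0) (hβ' : β' < 0) : False := by
  have hpb : P p = β • P b + α • P a + γ • P c := by rw [hp]; abel
  have hqb : P q = β' • P b + α' • P a + γ' • P c := by rw [hq]; abel
  rcases lt_trichotomy 0 (α * β' - α' * β) with hΔ | hΔ | hΔ
  · have k1 := H.same_cone_aux ac pa pc qa qc hpq h1 hp h1' hq hβ hβ' hΔ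
    have k2 := H.same_cone_aux bc qb qc pb pc hpq.symm (by linarith) hqb (by linarith) hpb
      hα' hα (by linarith)
    nlinarith
  · have hne := H.inj.ne hpq
    have ha0 : α ≠ 0 := hα.ne
    have ha0' : α' ≠ 0 := hα'.ne
    have hβe : β' = α' / α * β := by field_simp; linarith
    have hγ2 : γ = 1 - α - β := by linarith
    have hγ2' : γ' = 1 - α' - β' := by linarith
    have e2 : P q = (α' / α) • P p + (1 - α' / α) • P c := by
      rw [hp, hq, hγ2', hγ2, hβe]
      ext <;> simp <;> field_simp <;> ring
    have e1 : P p = (α / α') • P q + (1 - α / α') • P c := by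
      rw [e2]
      ext <;> simp <;> field_simp <;> ring
    rcases lt_trichotomy α α' with h | h | h
    · refine H.nv _ _ q pc hpq.symm (H.ne _ _ qc) (ic_mem_open _ _ _ _ ?_ ?_ e2)
      · exact div_pos_of_neg_of_neg hα' hα
      · rwa [div_lt_one_of_neg hα]
    · rw [← h, div_self ha0] at e2
      simp at e2
      exact hne e2.symm
    · refine H.nv _ _ p qc hpq (H.ne _ _ pc) (ic_mem_open _ _ _ _ ?_ ?_ e1)
      · exact div_pos_of_neg_of_neg hα hα'
      · rwa [div_lt_one_of_neg hα']
  · have k1 := H.same_cone_aux ac qa qc pa pc hpq.symm h1' hq h1 hp hβ' hβ (by linarith)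
    have k2 := H.same_cone_aux bc pb pc qb qc hpq (by linarith) hpb (by linarith) hqb
      hα hα' (by linarith)
    nlinarith

/-- One of two hubs of a triangle is inside. -/
lemma icPlanar.hub (H : icPlanar P adj) {a b c p q : ι} (ab : adj a b)
    (ac : adj a c) (bc : adj b c) (pa : adj p a) (pb : adj p b) (pc : adj p c)
    (qa : adj q a) (qb : adj q b) (qc : adj q c) (hpq : p ≠ q) :
    icIn (P p) (P a) (P b) (P c) ∨ icIn (P q) (P a) (P b) (P c) := by
  by_contra! hcon
  obtain ⟨α, β, γ, h1, hp, hc⟩ := H.cone ab ac bc pa pb pc hcon.1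
  obtain ⟨α', β', γ', h1', hq, hc'⟩ := H.cone ab ac bc qa qb qc hcon.2
  have ba := H.symm _ _ ab
  have ca := H.symm _ _ ac
  have cb := H.symm _ _ bc
  have p2 : P p = α • P a + γ • P c + β • P b := by rw [hp]; abel
  have p3 : P p = β • P b + α • P a + γ • P c := by rw [hp]; abel
  have p4 : P p = β • P b + γ • P c + α • P a := by rw [hp]; abel
  have p5 : P p = γ • P c + α • P a + β • P b := by rw [hp]; abel
  have p6 : P p = γ • P c + β • P b + α • P a := by rw [hp]; abel
  have q2 : P q = α' • P a + γ' • P c + β' • P b := by rw [hq]; abel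
  have q3 : P q = β' • P b + α' • P a + γ' • P c := by rw [hq]; abel
  have q4 : P q = β' • P b + γ' • P c + α' • P a := by rw [hq]; abel
  have q5 : P q = γ' • P c + α' • P a + β' • P b := by rw [hq]; abel
  have q6 : P q = γ' • P c + β' • P b + α' • P a := by rw [hq]; abel
  rcases hc with ⟨u1, u2⟩ | ⟨u1, u2⟩ | ⟨u1, u2⟩ <;>
    rcases hc' with ⟨w1, w2⟩ | ⟨w1, w2⟩ | ⟨w1, w2⟩
  · exact H.same_cone ac bc pa pb pc qa qb qc hpq h1 hp h1' hq u1 u2 w1 w2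
  · exact H.diff_cone bc pb pc qb qc hpq (by linarith) p3 (by linarith) q3 u2 u1 w1 w2
  · exact H.diff_cone ac pa pc qa qc hpq (by linarith) hp (by linarith) hq u1 u2 w1 w2
  · exact H.diff_cone cb pc pb qc qb hpq (by linarith) p5 (by linarith) q5 u2 u1 w1 w2
  · exact H.same_cone ab cb pa pc pb qa qc qb hpq (by linarith) p2 (by linarith) q2 u1 u2 w1 w2
  · exact H.diff_cone ab pa pb qa qb hpq (by linarith) p2 (by linarith) q2 u1 u2 w2 w1
  · exact H.diff_cone ca pc pa qc qa hpq (by linarith) p6 (by linarith) q6 u2 u1 w2 w1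
  · exact H.diff_cone ba pb pa qb qa hpq (by linarith) p4 (by linarith) q4 u1 u2 w2 w1
  · exact H.same_cone ba ca pb pc pa qb qc qa hpq (by linarith) p4 (by linarith) q4 u1 u2 w1 w2

end planar

lemma icIn_perm {p a b c : ℝ × ℝ} (h : icIn p a b c) : icIn p c b a := by
  obtain ⟨hD, α, β, γ, h1, h2, h3, h4, h5⟩ := h
  refine ⟨?_, γ, β, α, h3, h2, h1, by linarith, by rw [h5]; abel⟩
  intro h; apply hD; simp only [icD] at *; linarith

lemma icIn_not_back {a b c p : ℝ × ℝ} (h : icIn p a b c) : ¬ icIn a b c p := by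
  rintro ⟨-, α', β', γ', h1', h2', h3', h4', h5'⟩
  obtain ⟨hD, α, β, γ, h1, h2, h3, h4, h5⟩ := h
  have e : (1 : ℝ) • a + (0 : ℝ) • b + (0 : ℝ) • c =
      (γ' * α) • a + (α' + γ' * β) • b + (β' + γ' * γ) • c := by
    conv_lhs => rw [one_smul, zero_smul, zero_smul, add_zero, add_zero, h5', h5]
    ext <;> simp <;> ring
  have := (ic_bary_unique a b c hD _ _ _ _ _ _ (by norm_num)
    (by linear_combination h4' + γ' * h4) e).2.1
  nlinarith [mul_pos h3' h2]

lemma icIn_fst {p a b c : ℝ × ℝ} (h : icIn p a b c) :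
    min a.1 (min b.1 c.1) < p.1 ∧ p.1 < max a.1 (max b.1 c.1) := by
  obtain ⟨hD, α, β, γ, h1, h2, h3, h4, h5⟩ := h
  have e : p.1 = α * a.1 + β * b.1 + γ * c.1 := by rw [h5]; simp
  have hα : α = 1 - β - γ := by linarith
  have hne : ¬ (a.1 = b.1 ∧ b.1 = c.1) := by
    rintro ⟨u, w⟩; apply hD; simp only [icD]; rw [u, w]; ring
  constructor
  · by_contra! hcon
    simp only [le_min_iff] at hcon
    obtain ⟨k1, k2, k3⟩ := hcon
    have z : α * (a.1 - p.1) + β * (b.1 - p.1) + γ * (c.1 - p.1) = 0 := by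
      linear_combination -e - p.1 * h4
    have m1 := mul_nonneg h1.le (sub_nonneg.2 k1)
    have m2 := mul_nonneg h2.le (sub_nonneg.2 k2)
    have m3 := mul_nonneg h3.le (sub_nonneg.2 k3)
    have n1 := (mul_eq_zero.1 (by linarith : α * (a.1 - p.1) = 0)).resolve_left h1.ne'
    have n2 := (mul_eq_zero.1 (by linarith : β * (b.1 - p.1) = 0)).resolve_left h2.ne'
    have n3 := (mul_eq_zero.1 (by linarith : γ * (c.1 - p.1) = 0)).resolve_left h3.ne'
    exact hne ⟨by linarith, by linarith⟩
  · by_contra! hcon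
    simp only [max_le_iff] at hcon
    obtain ⟨k1, k2, k3⟩ := hcon
    have z : α * (p.1 - a.1) + β * (p.1 - b.1) + γ * (p.1 - c.1) = 0 := by
      linear_combination e + p.1 * h4
    have m1 := mul_nonneg h1.le (sub_nonneg.2 k1)
    have m2 := mul_nonneg h2.le (sub_nonneg.2 k2)
    have m3 := mul_nonneg h3.le (sub_nonneg.2 k3)
    have n1 := (mul_eq_zero.1 (by linarith : α * (p.1 - a.1) = 0)).resolve_left h1.ne'
    have n2 := (mul_eq_zero.1 (by linarith : β * (p.1 - b.1) = 0)).resolve_left h2.ne'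
    have n3 := (mul_eq_zero.1 (by linarith : γ * (p.1 - c.1) = 0)).resolve_left h3.ne'
    exact hne ⟨by linarith, by linarith⟩

lemma icIn_swap {p a b c : ℝ × ℝ} (h : icIn p a b c) : icIn p.swap a.swap b.swap c.swap := by
  obtain ⟨hD, α, β, γ, h1, h2, h3, h4, h5⟩ := h
  refine ⟨?_, α, β, γ, h1, h2, h3, h4, by rw [h5]; ext <;> simp⟩
  intro h; apply hD; simp only [icD, Prod.fst_swap, Prod.snd_swap] at *; linarith

lemma ic_ivt3 (f0 f1 g0 g1 h0 h1 : ℝ) (hf : 0 < f0) (hg : 0 < g0) (hh : 0 < h0)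
    (h : f1 ≤ 0 ∨ g1 ≤ 0 ∨ h1 ≤ 0) :
    ∃ t : ℝ, 0 < t ∧ t ≤ 1 ∧ 0 ≤ (1 - t) * f0 + t * f1 ∧ 0 ≤ (1 - t) * g0 + t * g1 ∧
      0 ≤ (1 - t) * h0 + t * h1 ∧ ((1 - t) * f0 + t * f1 = 0 ∨ (1 - t) * g0 + t * g1 = 0 ∨
      (1 - t) * h0 + t * h1 = 0) := by
  let m : ℝ → ℝ := fun t =>
    min ((1 - t) * f0 + t * f1) (min ((1 - t) * g0 + t * g1) ((1 - t) * h0 + t * h1))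
  have hm : Continuous m := by fun_prop
  have h00 : 0 < m 0 := by simp [m, hf, hg, hh]
  have h11 : m 1 ≤ 0 := by simpa [m] using h
  obtain ⟨t, ht, e⟩ := intermediate_value_Icc' (zero_le_one) hm.continuousOn ⟨h11, h00.le⟩
  have ht0 : t ≠ 0 := by rintro rfl; linarith
  have e' : min ((1 - t) * f0 + t * f1) (min ((1 - t) * g0 + t * g1) ((1 - t) * h0 + t * h1)) = 0 := e
  refine ⟨t, lt_of_le_of_ne ht.1 ht0.symm, ht.2, ?_, ?_, ?_, ?_⟩
  · rw [← e']; exact min_le_left _ _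
  · rw [← e']; exact (min_le_right _ _).trans (min_le_left _ _)
  · rw [← e']; exact (min_le_right _ _).trans (min_le_right _ _)
  · rcases min_choice ((1 - t) * f0 + t * f1)
      (min ((1 - t) * g0 + t * g1) ((1 - t) * h0 + t * h1)) with k | k
    · left; rw [← k, e']
    · right
      rcases min_choice ((1 - t) * g0 + t * g1) ((1 - t) * h0 + t * h1) with k' | k'
      · left; rw [← k', ← k, e']
      · right; rw [← k', ← k, e']

lemma ic_between {u v x y : ℝ × ℝ} {β β' : ℝ} (hx : x = (1 - β) • u + β • v)
    (hy : y = (1 - β') • u + β' • v) (h : β < 0) (h' : 0 < β') : u ∈ openSegment ℝ x y := by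
  have hd : 0 < β' - β := by linarith
  have hd0 := hd.ne'
  refine ic_mem_open _ _ _ (β' / (β' - β)) (div_pos h' hd) (by rw [div_lt_one hd]; linarith) ?_
  rw [hx, hy]
  ext <;> simp <;> field_simp <;> ring

section tri
variable {V : Type*} {G : SimpleGraph V} {ρ : V → ℝ × ℝ}

lemma ic_nv (h : IsStraightLineDrawing G ρ) {a b v : V} (hab : G.Adj a b) (h1 : v ≠ a)
    (h2 : v ≠ b) : ρ v ∉ openSegment ℝ (ρ a) (ρ b) :=
  h.no_vertex_on_edge s(a, b) hab v (by simp [h1, h2])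

lemma ic_tri_nondeg (h : IsStraightLineDrawing G ρ) {a b c : V} (ab : G.Adj a b)
    (ac : G.Adj a c) (bc : G.Adj b c) : icD (ρ a) (ρ b) (ρ c) ≠ 0 := by
  intro hD
  rcases ic_collinear _ _ _ hD (h.inj.ne ab.ne) (h.inj.ne ac.ne) (h.inj.ne bc.ne) with k | k | k
  · exact ic_nv h bc ab.ne ac.ne k
  · exact ic_nv h ac ab.ne' bc.ne k
  · exact ic_nv h ab ac.ne' bc.ne' k

lemma ic_crosses {a b c d : V} (h1 : a ≠ c) (h2 : a ≠ d) (h3 : b ≠ c) (h4 : b ≠ d)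
    {r : ℝ × ℝ} (k1 : r ∈ openSegment ℝ (ρ a) (ρ b)) (k2 : r ∈ openSegment ℝ (ρ c) (ρ d)) :
    Crosses ρ s(a, b) s(c, d) := by
  refine ⟨?_, r, k1, k2⟩
  intro v hv hv'
  simp only [Sym2.mem_iff] at hv hv'
  rcases hv with rfl | rfl <;> rcases hv' with rfl | rfl <;> contradiction

/-- Edges of a triangle are not crossed by an edge leaving it, if no crossing is available. -/
lemma ic_leave (h : IsStraightLineDrawing G ρ) {u v z : V} (uv : G.Adj u v) (uz : G.Adj u z)
    (vz : G.Adj v z) {p q : V} (pq : G.Adj p q) (pu : p ≠ u) (pv : p ≠ v) (pz : p ≠ z)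
    (qu : q ≠ u) (qv : q ≠ v) (qz : q ≠ z)
    (k1 : ∀ r ∈ openSegment ℝ (ρ p) (ρ q), r ∉ openSegment ℝ (ρ u) (ρ v))
    (k2 : ∀ r ∈ openSegment ℝ (ρ p) (ρ q), r ∉ openSegment ℝ (ρ u) (ρ z))
    (k3 : ∀ r ∈ openSegment ℝ (ρ p) (ρ q), r ∉ openSegment ℝ (ρ v) (ρ z))
    (hp : icIn (ρ p) (ρ u) (ρ v) (ρ z)) : icIn (ρ q) (ρ u) (ρ v) (ρ z) := by
  obtain ⟨hD, α, β, γ, ha, hb, hc, h1, hp⟩ := hp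
  obtain ⟨α', β', γ', h1', hq⟩ := ic_bary _ _ _ (ρ q) hD
  by_contra hcon
  have hout : α' ≤ 0 ∨ β' ≤ 0 ∨ γ' ≤ 0 := by
    by_contra! hh
    exact hcon ⟨hD, α', β', γ', hh.1, hh.2.1, hh.2.2, h1', hq⟩
  obtain ⟨t, t0, t1, e1, e2, e3, e4⟩ := ic_ivt3 α α' β β' γ γ' ha hb hc hout
  have hr : (1 - t) • ρ p + t • ρ q = ((1 - t) * α + t * α') • ρ u +
      ((1 - t) * β + t * β') • ρ v + ((1 - t) * γ + t * γ') • ρ z := by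
    rw [hp, hq]; ext <;> simp <;> ring
  have hB := ic_boundary (ρ u) (ρ v) (ρ z) _ _ _ _
    (by linear_combination (1 - t) * h1 + t * h1') e1 e2 e3 e4 hr
  rcases t1.lt_or_eq with t1 | rfl
  · have hm : (1 - t) • ρ p + t • ρ q ∈ openSegment ℝ (ρ p) (ρ q) :=
      ⟨1 - t, t, by linarith, t0, by ring, rfl⟩
    generalize (1 - t) • ρ p + t • ρ q = r at hm hB
    rcases hB with rfl | rfl | rfl | k | k | k
    · exact ic_nv h pq pu.symm qu.symm hm
    · exact ic_nv h pq pv.symm qv.symm hm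
    · exact ic_nv h pq pz.symm qz.symm hm
    · exact k1 _ hm k
    · exact k2 _ hm k
    · exact k3 _ hm k
  · simp only [sub_self, zero_smul, one_smul, zero_add] at hB
    rcases hB with k | k | k | k | k | k
    · exact qu (h.inj k)
    · exact qv (h.inj k)
    · exact qz (h.inj k)
    · exact ic_nv h uv qu qv k
    · exact ic_nv h uz qu qz k
    · exact ic_nv h vz qv qz k

/-- Entering the triangle through side `uv`. -/
lemma ic_enter (h : IsStraightLineDrawing G ρ) {u v z : V} (uz : G.Adj u z)
    (vz : G.Adj v z) {x y : V} (xy : G.Adj x y) (xu : x ≠ u) (xv : x ≠ v) (xz : x ≠ z)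
    (yz : y ≠ z)
    (k2 : ∀ r ∈ openSegment ℝ (ρ x) (ρ y), r ∉ openSegment ℝ (ρ u) (ρ z))
    (k3 : ∀ r ∈ openSegment ℝ (ρ x) (ρ y), r ∉ openSegment ℝ (ρ v) (ρ z))
    (hD : icD (ρ u) (ρ v) (ρ z) ≠ 0)
    {α β γ s' t' : ℝ} (h1 : α + β + γ = 1) (hx : ρ x = α • ρ u + β • ρ v + γ • ρ z)
    (hγ : 0 < γ) (hs' : 0 < s') (ht' : 0 < t') (hst' : s' + t' = 1)
    (hX : s' • ρ u + t' • ρ v ∈ openSegment ℝ (ρ x) (ρ y)) :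
    icIn (ρ x) (ρ u) (ρ v) (ρ z) := by
  by_contra hcon
  have hout : α ≤ 0 ∨ β ≤ 0 ∨ (1 : ℝ) ≤ 0 := by
    by_contra! hh
    exact hcon ⟨hD, α, β, γ, hh.1, hh.2.1, hγ, h1, hx⟩
  obtain ⟨t, t0, t1, e1, e2, -, e4⟩ := ic_ivt3 s' α t' β 1 1 hs' ht' one_pos hout
  have e4 : (1 - t) * s' + t * α = 0 ∨ (1 - t) * t' + t * β = 0 := by
    rcases e4 with e | e | e
    · exact Or.inl e
    · exact Or.inr e
    · exfalso; linarith
  have e3 : 0 < t * γ := mul_pos t0 hγ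
  have hr : (1 - t) • (s' • ρ u + t' • ρ v) + t • ρ x = ((1 - t) * s' + t * α) • ρ u +
      ((1 - t) * t' + t * β) • ρ v + (t * γ) • ρ z := by
    rw [hx]; ext <;> simp <;> ring
  -- the point lies on `uz` or `vz` or is `z`
  have hB : (1 - t) • (s' • ρ u + t' • ρ v) + t • ρ x = ρ z ∨
      (1 - t) • (s' • ρ u + t' • ρ v) + t • ρ x ∈ openSegment ℝ (ρ u) (ρ z) ∨
      (1 - t) • (s' • ρ u + t' • ρ v) + t • ρ x ∈ openSegment ℝ (ρ v) (ρ z) := by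
    rw [hr]
    have hsum : ((1 - t) * s' + t * α) + ((1 - t) * t' + t * β) + t * γ = 1 := by
      linear_combination (1 - t) * hst' + t * h1
    generalize (1 - t) * s' + t * α = A at *
    generalize (1 - t) * t' + t * β = B at *
    generalize t * γ = C at *
    rcases e1.eq_or_lt with rfl | e1
    · rcases e2.eq_or_lt with rfl | e2
      · left
        have : C = 1 := by linarith
        simp [this]
      · right; right
        exact ⟨B, C, e2, e3, by linarith, by simp⟩
    · right; left
      have : B = 0 := by
        rcases e4 with e | e
        · linarith
        · exact e
      subst this
      exact ⟨A, C, e1, e3, by linarith, by simp⟩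
  rcases t1.lt_or_eq with t1 | rfl
  · have hm : (1 - t) • (s' • ρ u + t' • ρ v) + t • ρ x ∈ openSegment ℝ (ρ x) (ρ y) := by
      obtain ⟨a, b, a0, b0, ab, e⟩ := hX
      refine ⟨(1 - t) * a + t, (1 - t) * b, ?_, ?_, ?_, ?_⟩
      · have := mul_pos (sub_pos.2 t1) a0
        linarith
      · exact mul_pos (sub_pos.2 t1) b0
      · linear_combination (1 - t) * ab
      · rw [← e]; ext <;> simp <;> ring
    generalize (1 - t) • (s' • ρ u + t' • ρ v) + t • ρ x = r at hm hB
    rcases hB with rfl | k | k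
    · exact ic_nv h xy xz.symm yz.symm hm
    · exact k2 _ hm k
    · exact k3 _ hm k
  · simp only [sub_self, zero_smul, one_smul, zero_add] at hB
    rcases hB with k | k | k
    · exact xz (h.inj k)
    · exact ic_nv h uz xu xz k
    · exact ic_nv h vz xv xz k

lemma ic_triangles_aux (H : IsICPlanarDrawing G ρ) {u v z x y w : V}
    (uv : G.Adj u v) (uz : G.Adj u z) (vz : G.Adj v z)
    (xy : G.Adj x y) (xw : G.Adj x w) (yw : G.Adj y w)
    (xu : x ≠ u) (xv : x ≠ v) (xz : x ≠ z) (yu : y ≠ u) (yv : y ≠ v) (yz : y ≠ z)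
    (wu : w ≠ u) (wv : w ≠ v) (wz : w ≠ z) {s' t' : ℝ} (hs' : 0 < s') (ht' : 0 < t')
    (hst' : s' + t' = 1) (hX : s' • ρ u + t' • ρ v ∈ openSegment ℝ (ρ x) (ρ y))
    {α β γ α' β' γ' : ℝ} (h1 : α + β + γ = 1) (hx : ρ x = α • ρ u + β • ρ v + γ • ρ z)
    (h1' : α' + β' + γ' = 1) (hy : ρ y = α' • ρ u + β' • ρ v + γ' • ρ z)
    (hγ : 0 < γ) (hγ' : γ' < 0) : False := by
  obtain ⟨h, H2, H3⟩ := H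
  have hD := ic_tri_nondeg h uv uz vz
  have hX' : s' • ρ u + t' • ρ v ∈ openSegment ℝ (ρ u) (ρ v) := ⟨s', t', hs', ht', hst', rfl⟩
  have hcr : Crosses ρ s(u, v) s(x, y) := ic_crosses xu.symm yu.symm xv.symm yv.symm hX' hX
  have K1 : ∀ p q, G.Adj p q → p ≠ u → p ≠ v → q ≠ u → q ≠ v → s(p, q) ≠ s(x, y) →
      ∀ r ∈ openSegment ℝ (ρ p) (ρ q), r ∉ openSegment ℝ (ρ u) (ρ v) := by
    intro p q pq pu pv qu qv hne r hr hr'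
    exact hne (H2 s(u, v) uv s(p, q) pq s(x, y) xy
      (ic_crosses pu.symm qu.symm pv.symm qv.symm hr' hr) hcr)
  have K2 : ∀ p q, G.Adj p q → p ≠ u → p ≠ z → q ≠ u → q ≠ z → 
      ∀ r ∈ openSegment ℝ (ρ p) (ρ q), r ∉ openSegment ℝ (ρ u) (ρ z) := by
    intro p q pq pu pz qu qz r hr hr'
    have hc := ic_crosses pu.symm qu.symm pz.symm qz.symm hr' hr
    refine H3 s(u, v) uv s(u, z) uz ⟨_, xy, hcr⟩ ⟨s(p, q), pq, hc⟩ ?_ u (by simp) (by simp)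
    intro e
    simp only [Sym2.eq_iff] at e
    rcases e with e | e
    · exact vz.ne e.2
    · exact uz.ne e.1
  have K3 : ∀ p q, G.Adj p q → p ≠ v → p ≠ z → q ≠ v → q ≠ z → 
      ∀ r ∈ openSegment ℝ (ρ p) (ρ q), r ∉ openSegment ℝ (ρ v) (ρ z) := by
    intro p q pq pv pz qv qz r hr hr'
    have hc := ic_crosses pv.symm qv.symm pz.symm qz.symm hr' hr
    refine H3 s(u, v) uv s(v, z) vz ⟨_, xy, hcr⟩ ⟨s(p, q), pq, hc⟩ ?_ v (by simp) (by simp)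
    intro e
    simp only [Sym2.eq_iff] at e
    rcases e with e | e
    · exact vz.ne e.2
    · exact uz.ne e.1
  have hxin : icIn (ρ x) (ρ u) (ρ v) (ρ z) :=
    ic_enter h uz vz xy xu xv xz yz (K2 _ _ xy xu xz yu yz) (K3 _ _ xy xv xz yv yz) hD h1 hx
      hγ hs' ht' hst' hX
  have hwin : icIn (ρ w) (ρ u) (ρ v) (ρ z) := by
    refine ic_leave h uv uz vz xw xu xv xz wu wv wz (K1 _ _ xw xu xv wu wv ?_)
      (K2 _ _ xw xu xz wu wz) (K3 _ _ xw xv xz wv wz) hxin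
    intro e
    simp only [Sym2.eq_iff] at e
    rcases e with e | e
    · exact yw.ne e.2.symm
    · exact xy.ne e.1
  have hyin : icIn (ρ y) (ρ u) (ρ v) (ρ z) := by
    refine ic_leave h uv uz vz yw.symm wu wv wz yu yv yz (K1 _ _ yw.symm wu wv yu yv ?_)
      (K2 _ _ yw.symm wu wz yu yz) (K3 _ _ yw.symm wv wz yv yz) hwin
    intro e
    simp only [Sym2.eq_iff] at e
    rcases e with e | e
    · exact xw.ne e.1.symm
    · exact yw.ne e.1.symm
  obtain ⟨-, a, b, c, -, -, c0, habc, he⟩ := hyin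
  rw [hy] at he
  have := (ic_bary_unique _ _ _ hD _ _ _ _ _ _ h1' habc he).2.2
  linarith

/-- Two vertex-disjoint triangles never cross in an IC-planar drawing. -/
lemma ic_triangles (H : IsICPlanarDrawing G ρ) {u v z x y w : V}
    (uv : G.Adj u v) (uz : G.Adj u z) (vz : G.Adj v z)
    (xy : G.Adj x y) (xw : G.Adj x w) (yw : G.Adj y w)
    (xu : x ≠ u) (xv : x ≠ v) (xz : x ≠ z) (yu : y ≠ u) (yv : y ≠ v) (yz : y ≠ z)
    (wu : w ≠ u) (wv : w ≠ v) (wz : w ≠ z) (X : ℝ × ℝ) (hX1 : X ∈ openSegment ℝ (ρ u) (ρ v))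
    (hX2 : X ∈ openSegment ℝ (ρ x) (ρ y)) : False := by
  have h := H.1
  have hD := ic_tri_nondeg h uv uz vz
  obtain ⟨s', t', hs', ht', hst', rfl⟩ := hX1
  obtain ⟨s, t, hs, ht, hst, e⟩ := id hX2
  obtain ⟨α, β, γ, h1, hx⟩ := ic_bary _ _ _ (ρ x) hD
  obtain ⟨α', β', γ', h1', hy⟩ := ic_bary _ _ _ (ρ y) hD
  have e' : (s * α + t * α') • ρ u + (s * β + t * β') • ρ v + (s * γ + t * γ') • ρ z
      = s' • ρ u + t' • ρ v + (0 : ℝ) • ρ z := by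
    rw [zero_smul, add_zero, ← e, hx, hy]; ext <;> simp <;> ring
  obtain ⟨f1, f2, f3⟩ := ic_bary_unique _ _ _ hD _ _ _ _ _ _
    (by linear_combination s * h1 + t * h1' + hst) (by linarith) e'
  rcases lt_trichotomy γ 0 with hγ | hγ | hγ
  · have hγ' : 0 < γ' := by
      have := mul_neg_of_pos_of_neg hs hγ
      exact pos_of_mul_pos_right (by linarith : 0 < t * γ') ht.le
    rw [openSegment_symm] at hX2
    exact ic_triangles_aux H uv uz vz xy.symm yw xw yu yv yz xu xv xz wu wv wz hs' ht' hst' hX2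
      h1' hy h1 hx hγ' hγ
  · subst hγ
    have hγ' : γ' = 0 := by
      have : t * γ' = 0 := by linarith
      exact (mul_eq_zero.1 this).resolve_left ht.ne'
    subst hγ'
    have hx' : ρ x = (1 - β) • ρ u + β • ρ v := by
      rw [hx, show α = 1 - β by linarith]; simp
    have hy' : ρ y = (1 - β') • ρ u + β' • ρ v := by
      rw [hy, show α' = 1 - β' by linarith]; simp
    have n1 : β ≠ 0 := by
      rintro rfl
      simp at hx'
      exact xu (h.inj hx')
    have n2 : β' ≠ 0 := by
      rintro rfl
      simp at hy'
      exact yu (h.inj hy')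
    have n3 : ¬ (0 < β ∧ β < 1) := by
      rintro ⟨i, j⟩
      exact ic_nv h uv xu xv ⟨1 - β, β, by linarith, i, by ring, hx'.symm⟩
    have n4 : ¬ (0 < β' ∧ β' < 1) := by
      rintro ⟨i, j⟩
      exact ic_nv h uv yu yv ⟨1 - β', β', by linarith, i, by ring, hy'.symm⟩
    rcases lt_or_gt_of_ne n1 with i | i
    · have : 0 < β' := by
        have := mul_neg_of_pos_of_neg hs i
        exact pos_of_mul_pos_right (by linarith : 0 < t * β') ht.le
      exact ic_nv h xy xu.symm yu.symm (ic_between hx' hy' i this)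
    · rcases lt_or_gt_of_ne n2 with j | j
      · exact ic_nv h xy.symm yu.symm xu.symm (ic_between hy' hx' j i)
      · have i1 : 1 ≤ β := by
          by_contra! hh; exact n3 ⟨i, hh⟩
        have j1 : 1 ≤ β' := by
          by_contra! hh; exact n4 ⟨j, hh⟩
        nlinarith
  · have hγ' : γ' < 0 := by
      have := mul_pos hs hγ
      by_contra! hh
      have := mul_nonneg ht.le hh
      linarith
    exact ic_triangles_aux H uv uz vz xy xw yw xu xv xz yu yv yz wu wv wz hs' ht' hst' hX2
      h1 hx h1' hy hγ hγ'

end tri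

/-- The nested (stacked) triangulation points. -/
noncomputable def icv : ℕ → ℝ × ℝ
  | 0 => (0, 0)
  | 1 => (1, 0)
  | 2 => (0, 1)
  | (k + 3) => (1 / 3 : ℝ) • icv k + (1 / 3 : ℝ) • icv (k + 1) + (1 / 3 : ℝ) • icv (k + 2)

/-- Barycentric coordinates with respect to the `k`-th triangle. -/
def icL : ℕ → ℝ × ℝ → ℝ × ℝ × ℝ
  | 0, p => (1 - p.1 - p.2, p.1, p.2)
  | (k + 1), p => ((icL k p).2.1 - (icL k p).1, (icL k p).2.2 - (icL k p).1, 3 * (icL k p).1)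

lemma icL_affine (k : ℕ) (p q : ℝ × ℝ) (s t : ℝ) (h : s + t = 1) :
    icL k (s • p + t • q) = s • icL k p + t • icL k q := by
  induction k with
  | zero =>
    have : s = 1 - t := by linarith
    subst this
    simp only [icL]
    ext <;> simp <;> ring
  | succ k ih =>
    simp only [icL, ih]
    ext <;> simp <;> ring

lemma icL_affine3 (k : ℕ) (p q r : ℝ × ℝ) (s t u : ℝ) (h : s + t + u = 1) :
    icL k (s • p + t • q + u • r) = s • icL k p + t • icL k q + u • icL k r := by
  induction k with
  | zero =>
    have : s = 1 - t - u := by linarith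
    subst this
    simp only [icL]
    ext <;> simp <;> ring
  | succ k ih =>
    simp only [icL, ih]
    ext <;> simp <;> ring

lemma icL_v (k : ℕ) : icL k (icv k) = (1, 0, 0) ∧ icL k (icv (k + 1)) = (0, 1, 0) ∧
    icL k (icv (k + 2)) = (0, 0, 1) := by
  induction k with
  | zero => simp [icL, icv]
  | succ k ih =>
    obtain ⟨h0, h1, h2⟩ := ih
    refine ⟨by simp [icL, h1], by simp [icL, h2], ?_⟩
    show icL (k + 1) (icv (k + 3)) = _
    simp only [icL, icv]
    rw [icL_affine3 _ _ _ _ _ _ _ (by norm_num), h0, h1, h2]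
    simp

lemma icL_comb (k : ℕ) (s t u : ℝ) (h : s + t + u = 1) :
    icL k (s • icv k + t • icv (k + 1) + u • icv (k + 2)) = (s, t, u) := by
  obtain ⟨h0, h1, h2⟩ := icL_v k
  rw [icL_affine3 _ _ _ _ _ _ _ h, h0, h1, h2]
  simp

/-- The position of the vertices. -/
noncomputable def icPos : ℕ × ℕ → ℝ × ℝ
  | (i, 0) => icv i
  | (k, 1) => (1 / 2 : ℝ) • icv k + (1 / 3 : ℝ) • icv (k + 1) + (1 / 6 : ℝ) • icv (k + 2)
  | (k, 2) => (1 / 3 : ℝ) • icv k + (1 / 2 : ℝ) • icv (k + 1) + (1 / 6 : ℝ) • icv (k + 2)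
  | (k, _) => (1 / 3 : ℝ) • icv k + (1 / 6 : ℝ) • icv (k + 1) + (1 / 2 : ℝ) • icv (k + 2)

/-- The open `k`-th triangle. -/
def icF (k : ℕ) (p : ℝ × ℝ) : Prop := 0 < (icL k p).1 ∧ 0 < (icL k p).2.1 ∧ 0 < (icL k p).2.2

/-- Order types of barycentric coordinates. -/
def icReg : ℕ → ℝ × ℝ × ℝ → Prop
  | 0, (α, β, γ) => α = β ∧ β = γ
  | 1, (α, β, γ) => β = γ ∧ β < α
  | 2, (α, β, γ) => α = γ ∧ α < β
  | 3, (α, β, γ) => α = β ∧ α < γ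
  | 4, (α, β, γ) => γ < β ∧ β < α
  | 5, (α, β, γ) => γ < α ∧ α < β
  | 6, (α, β, γ) => β < α ∧ α < γ
  | _, _ => False

/-- Label of a point. -/
def icLab (k τ : ℕ) (p : ℝ × ℝ) : Prop := icF k p ∧ icReg τ (icL k p)

lemma icF_anti {k l : ℕ} (h : k ≤ l) {p : ℝ × ℝ} (hp : icF l p) : icF k p := by
  induction l, h using Nat.le_induction with
  | base => exact hp
  | succ l _ ih =>
    apply ih
    simp only [icF, icL] at hp ⊢
    refine ⟨?_, ?_, ?_⟩ <;> linarith

lemma icReg_le {τ : ℕ} {x : ℝ × ℝ × ℝ} (h : icReg τ x) : τ ≤ 6 := by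
  by_contra! hc
  obtain ⟨m, rfl⟩ := Nat.exists_eq_add_of_le hc
  rw [show Nat.succ 6 + m = m + 7 by omega] at h
  simp [icReg] at h

lemma icReg_unique {τ σ : ℕ} {x : ℝ × ℝ × ℝ} (h : icReg τ x) (h' : icReg σ x) : τ = σ := by
  have h1 := icReg_le h
  have h2 := icReg_le h'
  obtain ⟨α, β, γ⟩ := x
  interval_cases τ <;> interval_cases σ <;> first | rfl | (simp only [icReg] at h h'; exfalso; obtain ⟨a, b⟩ := h; obtain ⟨c, d⟩ := h'; linarith)

lemma icLab_notF {k τ : ℕ} {p : ℝ × ℝ} (h : icLab k τ p) : ¬ icF (k + 1) p := by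
  obtain ⟨-, h⟩ := h
  have h1 := icReg_le h
  simp only [icF, icL]
  generalize icL k p = x at h
  obtain ⟨α, β, γ⟩ := x
  rintro ⟨a, b, -⟩
  simp only at a b
  interval_cases τ <;> simp only [icReg] at h <;> obtain ⟨c, d⟩ := h <;> linarith

lemma icLab_unique {k l τ σ : ℕ} {p : ℝ × ℝ} (h : icLab k τ p) (h' : icLab l σ p) :
    k = l ∧ τ = σ := by
  have hk : k = l := by
    rcases lt_trichotomy k l with hh | hh | hh
    · exact absurd (icF_anti hh h'.1) (icLab_notF h)
    · exact hh
    · exact absurd (icF_anti hh h.1) (icLab_notF h')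
  subst hk
  exact ⟨rfl, icReg_unique h.2 h'.2⟩

/-- The vertex associated with a label. -/
def icCenter (k τ : ℕ) : ℕ × ℕ := if τ < 4 then (k + 3, 0) else (k, τ - 3)

/-- The (oriented) edges. -/
def icR (u w : ℕ × ℕ) : Prop := ∃ k j, j < 3 ∧ ((u = (k + 3, 0) ∧ w = (k + j, 0)) ∨
  (u = (k, j + 1) ∧ w = (k + 3, 0)) ∨ (u = (k, j + 1) ∧ w = (k + j, 0)))

lemma icPos_v3 (k : ℕ) : icL k (icPos (k + 3, 0)) = (1 / 3, 1 / 3, 1 / 3) := by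
  show icL k (icv (k + 3)) = _
  rw [icv]
  exact icL_comb k _ _ _ (by norm_num)

lemma icPos_g1 (k : ℕ) : icL k (icPos (k, 1)) = (1 / 2, 1 / 3, 1 / 6) :=
  icL_comb k _ _ _ (by norm_num)

lemma icPos_g2 (k : ℕ) : icL k (icPos (k, 2)) = (1 / 3, 1 / 2, 1 / 6) :=
  icL_comb k _ _ _ (by norm_num)

lemma icPos_g3 (k : ℕ) : icL k (icPos (k, 3)) = (1 / 3, 1 / 6, 1 / 2) :=
  icL_comb k _ _ _ (by norm_num)

lemma icPos_0 (k : ℕ) : icL k (icPos (k, 0)) = (1, 0, 0) := (icL_v k).1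
lemma icPos_1 (k : ℕ) : icL k (icPos (k + 1, 0)) = (0, 1, 0) := (icL_v k).2.1
lemma icPos_2 (k : ℕ) : icL k (icPos (k + 2, 0)) = (0, 0, 1) := (icL_v k).2.2

lemma icR_lab {u w : ℕ × ℕ} (h : icR u w) : ∃ k τ, 1 ≤ τ ∧ τ ≤ 6 ∧
    (icCenter k τ = u ∨ icCenter k τ = w) ∧
    ∀ p ∈ openSegment ℝ (icPos u) (icPos w), icLab k τ p := by
  obtain ⟨k, j, hj, ⟨rfl, rfl⟩ | ⟨rfl, rfl⟩ | ⟨rfl, rfl⟩⟩ := h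
  · refine ⟨k, j + 1, by omega, by omega, ?_, ?_⟩
    · left; simp [icCenter, hj]
    · rintro p ⟨s, t, hs, ht, hst, rfl⟩
      unfold icLab icF
      rw [icL_affine k _ _ s t hst, icPos_v3]
      interval_cases j <;> simp [icPos_0, icPos_1, icPos_2, icReg] <;>
        (repeat' constructor) <;> linarith
  · refine ⟨k, j + 4, by omega, by omega, ?_, ?_⟩
    · left; simp [icCenter]
    · rintro p ⟨s, t, hs, ht, hst, rfl⟩
      unfold icLab icF
      rw [icL_affine k _ _ s t hst, icPos_v3]
      interval_cases j <;> simp [icPos_g1, icPos_g2, icPos_g3, icReg] <;>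
        (repeat' constructor) <;> linarith
  · refine ⟨k, j + 4, by omega, by omega, ?_, ?_⟩
    · left; simp [icCenter]
    · rintro p ⟨s, t, hs, ht, hst, rfl⟩
      unfold icLab icF
      rw [icL_affine k _ _ s t hst]
      interval_cases j <;> simp [icPos_g1, icPos_g2, icPos_g3, icPos_0, icPos_1, icPos_2, icReg] <;>
        (repeat' constructor) <;> linarith

lemma ic_vertex_lab (u : ℕ × ℕ) (hu : u.2 < 4) :
    (∃ k τ, (τ = 0 ∨ 4 ≤ τ) ∧ icCenter k τ = u ∧ icLab k τ (icPos u)) ∨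
    (u.1 < 3 ∧ u.2 = 0 ∧ ¬ icF 0 (icPos u)) := by
  obtain ⟨i, j⟩ := u
  simp only at hu
  interval_cases j
  · by_cases hi : i < 3
    · right
      refine ⟨hi, rfl, ?_⟩
      interval_cases i <;> simp [icF, icPos, icv, icL]
    · left
      obtain ⟨k, rfl⟩ := Nat.exists_eq_add_of_le (not_lt.1 hi)
      rw [add_comm 3 k]
      refine ⟨k, 0, by simp, by simp [icCenter], ?_⟩
      simp [icLab, icF, icPos_v3, icReg]
  · left
    refine ⟨i, 4, by simp, by simp [icCenter], ?_⟩
    simp only [icLab, icF, icPos_g1, icReg]; norm_num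
  · left
    refine ⟨i, 5, by simp, by simp [icCenter], ?_⟩
    simp only [icLab, icF, icPos_g2, icReg]; norm_num
  · left
    refine ⟨i, 6, by simp, by simp [icCenter], ?_⟩
    simp only [icLab, icF, icPos_g3, icReg]; norm_num

lemma icPos_inj {u w : ℕ × ℕ} (hu : u.2 < 4) (hw : w.2 < 4) (h : icPos u = icPos w) : u = w := by
  rcases ic_vertex_lab u hu with ⟨k, τ, -, e, l⟩ | ⟨a, b, c⟩ <;>
    rcases ic_vertex_lab w hw with ⟨k', τ', -, e', l'⟩ | ⟨a', b', c'⟩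
  · rw [h] at l
    obtain ⟨rfl, rfl⟩ := icLab_unique l l'
    rw [← e, e']
  · rw [← h] at c'
    exact absurd (icF_anti (Nat.zero_le _) l.1) c'
  · rw [h] at c
    exact absurd (icF_anti (Nat.zero_le _) l'.1) c
  · obtain ⟨i, j⟩ := u
    obtain ⟨i', j'⟩ := w
    simp only at a b a' b'
    subst b b'
    interval_cases i <;> interval_cases i' <;> simp [icPos, icv] at h ⊢

lemma icR_irrefl (u : ℕ × ℕ) : ¬ icR u u := by
  rintro ⟨k, j, hj, ⟨h1, h2⟩ | ⟨h1, h2⟩ | ⟨h1, h2⟩⟩ <;> rw [h1] at h2 <;>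
    simp only [Prod.mk.injEq] at h2 <;> omega

/-- Embedding of the finite vertex set. -/
def icE {n : ℕ} (v : Fin n × Fin 4) : ℕ × ℕ := (v.1.val, v.2.val)

lemma icE_inj {n : ℕ} {u w : Fin n × Fin 4} (h : icE u = icE w) : u = w := by
  simp only [icE, Prod.mk.injEq] at h
  exact Prod.ext (Fin.ext h.1) (Fin.ext h.2)

/-- The graph. -/
def icG (n : ℕ) : SimpleGraph (Fin n × Fin 4) where
  Adj u w := icR (icE u) (icE w) ∨ icR (icE w) (icE u)
  symm := ⟨fun _ _ h => h.symm⟩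
  loopless := ⟨fun _ h => icR_irrefl _ (h.elim id id)⟩

lemma icG_edge {n : ℕ} {e : Sym2 (Fin n × Fin 4)} (he : e ∈ (icG n).edgeSet) :
    ∃ k τ, 1 ≤ τ ∧ τ ≤ 6 ∧ (∃ v ∈ e, icE v = icCenter k τ) ∧
      ∀ p ∈ edgeSeg (fun v => icPos (icE v)) e, icLab k τ p := by
  induction e using Sym2.ind with
  | _ u w =>
    have aux : ∀ u w : Fin n × Fin 4, icR (icE u) (icE w) → 
        ∃ k τ, 1 ≤ τ ∧ τ ≤ 6 ∧ (∃ v ∈ s(u, w), icE v = icCenter k τ) ∧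
          ∀ p ∈ edgeSeg (fun v => icPos (icE v)) s(u, w), icLab k τ p := by
      intro u w h
      obtain ⟨k, τ, h1, h2, h3, h4⟩ := icR_lab h
      refine ⟨k, τ, h1, h2, ?_, h4⟩
      rcases h3 with h3 | h3
      · exact ⟨u, by simp, h3.symm⟩
      · exact ⟨w, by simp, h3.symm⟩
    rcases he with h | h
    · exact aux u w h
    · rw [Sym2.eq_swap]; exact aux w u h

lemma icG_disjoint {n : ℕ} {e f : Sym2 (Fin n × Fin 4)} (he : e ∈ (icG n).edgeSet)
    (hf : f ∈ (icG n).edgeSet) (h : ∀ v, v ∈ e → v ∉ f) (p : ℝ × ℝ)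
    (h1 : p ∈ edgeSeg (fun v => icPos (icE v)) e) :
    p ∉ edgeSeg (fun v => icPos (icE v)) f := by
  intro h2
  obtain ⟨k, τ, -, -, ⟨v, hv, ev⟩, hl⟩ := icG_edge he
  obtain ⟨k', τ', -, -, ⟨v', hv', ev'⟩, hl'⟩ := icG_edge hf
  obtain ⟨rfl, rfl⟩ := icLab_unique (hl p h1) (hl' p h2)
  have : v = v' := icE_inj (ev.trans ev'.symm)
  subst this
  exact h v hv hv'

lemma icG_drawing (n : ℕ) : IsICPlanarDrawing (icG n) (fun v => icPos (icE v)) := by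
  have nocross : ∀ e ∈ (icG n).edgeSet, ∀ f ∈ (icG n).edgeSet,
      ¬ Crosses (fun v => icPos (icE v)) e f := by
    rintro e he f hf ⟨h, p, h1, h2⟩
    exact icG_disjoint he hf h p h1 h2
  refine ⟨⟨?_, ?_, ?_⟩, ?_, ?_⟩
  · intro u w h
    exact icE_inj (icPos_inj u.2.isLt w.2.isLt h)
  · intro e he v hv hm
    obtain ⟨k, τ, t1, t2, ⟨v', hv', ev'⟩, hl⟩ := icG_edge he
    have l := hl _ hm
    rcases ic_vertex_lab (icE v) v.2.isLt with ⟨k', τ', -, e', l'⟩ | ⟨a, b, c⟩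
    · obtain ⟨rfl, rfl⟩ := icLab_unique l l'
      have : v' = v := icE_inj (ev'.trans e')
      subst this
      exact hv hv'
    · exact c (icF_anti (Nat.zero_le _) l.1)
  · intro e he f hf h p hp
    exact absurd hp.2 (icG_disjoint he hf h p hp.1)
  · intro e he f hf g hg h
    exact absurd h (nocross e he f hf)
  · rintro e he f hf ⟨e', he', h⟩
    exact absurd h (nocross e he e' he')

lemma ic_chain_int (K : ℕ) : ∀ (x : ℕ → ℤ) (m M : ℤ),
    (∀ j < K, min (x j) (min (x (j + 1)) (x (j + 2))) < x (j + 3) ∧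
      x (j + 3) < max (x j) (max (x (j + 1)) (x (j + 2)))) →
    (∀ j < 3, m ≤ x j ∧ x j ≤ M) → 2 * ((K / 3 : ℕ) : ℤ) ≤ M - m := by
  induction K using Nat.strong_induction_on with
  | _ K ih =>
    intro x m M h hb
    have b0 := hb 0 (by norm_num)
    have b1 := hb 1 (by norm_num)
    have b2 := hb 2 (by norm_num)
    by_cases hK : K < 3
    · have : K / 3 = 0 := by omega
      rw [this]; push_cast; linarith [b0.1, b0.2]
    · have h0 := h 0 (by omega)
      have h1 := h 1 (by omega)
      have h2 := h 2 (by omega)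
      norm_num at h0 h1 h2
      have := ih (K - 3) (by omega) (fun j => x (j + 3)) (m + 1) (M - 1)
        (by
          intro j hj
          have := h (j + 3) (by omega)
          rw [show j + 3 + 1 = j + 1 + 3 by omega, show j + 3 + 2 = j + 2 + 3 by omega] at this
          exact this)
        (by
          intro j hj
          interval_cases j <;> norm_num <;> omega)
      have e : K / 3 = (K - 3) / 3 + 1 := by omega
      rw [e]; push_cast at this ⊢; linarith

lemma ic_chain (w : ℕ → ℝ × ℝ) (K : ℕ) (hint : ∀ j, ∃ z : ℤ, (w j).1 = z)
    (hin : ∀ j < K, icIn (w (j + 3)) (w j) (w (j + 1)) (w (j + 2))) (W : ℝ)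
    (hW : ∀ i < 3, ∀ j < 3, (w i).1 - (w j).1 ≤ W) : 2 * ((K / 3 : ℕ) : ℝ) ≤ W := by
  choose x hx using hint
  have key := ic_chain_int K x (min (x 0) (min (x 1) (x 2))) (max (x 0) (max (x 1) (x 2)))
    (by
      intro j hj
      have := icIn_fst (hin j hj)
      simp only [hx] at this
      exact_mod_cast this)
    (by intro j hj; interval_cases j <;> simp)
  have hW' : ∀ i < 3, ∀ j < 3, ((x i - x j : ℤ) : ℝ) ≤ W := by
    intro i hi j hj
    have := hW i hi j hj
    rw [hx, hx] at this
    push_cast; exact this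
  have : ∃ i < 3, ∃ j < 3, max (x 0) (max (x 1) (x 2)) - min (x 0) (min (x 1) (x 2)) = x i - x j := by
    have h1 : ∃ i < 3, max (x 0) (max (x 1) (x 2)) = x i := by
      rcases max_choice (x 0) (max (x 1) (x 2)) with h | h
      · exact ⟨0, by norm_num, h⟩
      · rcases max_choice (x 1) (x 2) with h' | h'
        · exact ⟨1, by norm_num, h.trans h'⟩
        · exact ⟨2, by norm_num, h.trans h'⟩
    have h2 : ∃ i < 3, min (x 0) (min (x 1) (x 2)) = x i := by
      rcases min_choice (x 0) (min (x 1) (x 2)) with h | h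
      · exact ⟨0, by norm_num, h⟩
      · rcases min_choice (x 1) (x 2) with h' | h'
        · exact ⟨1, by norm_num, h.trans h'⟩
        · exact ⟨2, by norm_num, h.trans h'⟩
    obtain ⟨i, hi, e⟩ := h1
    obtain ⟨j, hj, e'⟩ := h2
    exact ⟨i, hi, j, hj, by rw [e, e']⟩
  obtain ⟨i, hi, j, hj, e⟩ := this
  rw [e] at key
  have k2 := hW' i hi j hj
  generalize K / 3 = L at key ⊢
  have k3 : ((2 * (L : ℤ) : ℤ) : ℝ) ≤ ((x i - x j : ℤ) : ℝ) := by exact_mod_cast key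
  push_cast at k3 k2
  linarith

lemma ic_width_one (a b c : ℝ × ℝ) (hD : icD a b c ≠ 0) (ha : ∃ z : ℤ, a.1 = z)
    (hb : ∃ z : ℤ, b.1 = z) (hc : ∃ z : ℤ, c.1 = z) (W : ℝ) (h1 : a.1 - b.1 ≤ W)
    (h2 : b.1 - a.1 ≤ W) (h3 : b.1 - c.1 ≤ W) (h4 : c.1 - b.1 ≤ W) : 1 ≤ W := by
  obtain ⟨x, hx⟩ := ha
  obtain ⟨y, hy⟩ := hb
  obtain ⟨z, hz⟩ := hc
  have : x ≠ y ∨ y ≠ z := by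
    by_contra! hh
    apply hD
    simp only [icD, hx, hy, hz, hh.1, hh.2]; ring
  rw [hx, hy] at h1 h2
  rw [hy, hz] at h3 h4
  rcases this with h | h
  · rcases lt_or_gt_of_ne h with h | h
    · have : (x : ℝ) + 1 ≤ y := by exact_mod_cast h
      linarith
    · have : (y : ℝ) + 1 ≤ x := by exact_mod_cast h
      linarith
  · rcases lt_or_gt_of_ne h with h | h
    · have : (y : ℝ) + 1 ≤ z := by exact_mod_cast h
      linarith
    · have : (z : ℝ) + 1 ≤ y := by exact_mod_cast h
      linarith

/-- Adjacency of base vertices. -/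
def icAdj {n : ℕ} (i j : Fin n) : Prop :=
  i.val ≠ j.val ∧ (3 ≤ i.val ∨ 3 ≤ j.val) ∧ i.val ≤ j.val + 3 ∧ j.val ≤ i.val + 3

lemma icAdj_gadget {n : ℕ} {i j : Fin n} (h : icAdj i j) :
    (icG n).Adj (i, 0) (j, 0) ∧ ∃ z : Fin n × Fin 4, (icG n).Adj (i, 0) z ∧
      (icG n).Adj (j, 0) z ∧ z.2 ≠ 0 ∧ z.1.val + 3 = max i.val j.val ∧
      z.1.val + z.2.val = min i.val j.val + 1 := by
  have aux : ∀ i j : Fin n, j.val < i.val → 3 ≤ i.val → i.val ≤ j.val + 3 →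
      (icG n).Adj (i, 0) (j, 0) ∧ ∃ z : Fin n × Fin 4, (icG n).Adj (i, 0) z ∧
      (icG n).Adj (j, 0) z ∧ z.2 ≠ 0 ∧ z.1.val + 3 = max i.val j.val ∧
      z.1.val + z.2.val = min i.val j.val + 1 := by
    intro i j h1 h2 h3
    have e1 : i.val - 3 + 3 = i.val := by omega
    have e2 : i.val - 3 + (j.val + 3 - i.val) = j.val := by omega
    refine ⟨Or.inl ⟨i.val - 3, j.val + 3 - i.val, by omega, Or.inl ⟨?_, ?_⟩⟩,
      (⟨i.val - 3, by omega⟩, ⟨j.val + 3 - i.val + 1, by omega⟩),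
      Or.inr ⟨i.val - 3, j.val + 3 - i.val, by omega, Or.inr (Or.inl ⟨rfl, ?_⟩)⟩,
      Or.inr ⟨i.val - 3, j.val + 3 - i.val, by omega, Or.inr (Or.inr ⟨rfl, ?_⟩)⟩, ?_, ?_, ?_⟩
    · simp [icE, e1]
    · simp [icE, e2]
    · simp [icE, e1]
    · simp [icE, e2]
    · simp [Fin.ext_iff]
    · simp only; omega
    · simp only; omega
  obtain ⟨h0, h1, h2, h3⟩ := h
  rcases lt_or_gt_of_ne h0 with hl | hl
  · obtain ⟨k1, z, k2, k3, k4, k5, k6⟩ := aux j i hl (by omega) (by omega)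
    exact ⟨k1.symm, z, k3, k2, k4, by rw [k5, max_comm], by rw [k6, min_comm]⟩
  · exact aux i j hl (by omega) (by omega)

lemma ic_planar_base {n : ℕ} {ρ : Fin n × Fin 4 → ℝ × ℝ} (H : IsICPlanarDrawing (icG n) ρ) :
    icPlanar (fun i : Fin n => ρ (i, 0)) icAdj where
  symm := by
    rintro a b ⟨h1, h2, h3, h4⟩
    exact ⟨h1.symm, h2.symm, h4, h3⟩
  ne := by
    rintro a b ⟨h1, -⟩ rfl
    exact h1 rfl
  inj := by
    intro a b h
    have := H.1.inj h
    simpa using this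
  nv := by
    intro a b v hab h1 h2
    exact ic_nv H.1 (icAdj_gadget hab).1 (by simpa using h1) (by simpa using h2)
  nc := by
    intro a b c d hab hcd ac ad bc bd X h1 h2
    obtain ⟨k1, z, k2, k3, k4, k5, k6⟩ := icAdj_gadget hab
    obtain ⟨l1, w, l2, l3, l4, l5, l6⟩ := icAdj_gadget hcd
    have wz : w ≠ z := by
      rintro rfl
      rw [k5] at l5
      rw [k6] at l6
      have := Fin.val_ne_of_ne ac
      have := Fin.val_ne_of_ne ad
      have := Fin.val_ne_of_ne bc
      have := Fin.val_ne_of_ne bd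
      omega
    have nz : ∀ i : Fin n, (i, (0 : Fin 4)) ≠ z := by
      rintro i rfl; exact k4 rfl
    have nw : ∀ i : Fin n, w ≠ (i, (0 : Fin 4)) := by
      rintro i rfl; exact l4 rfl
    exact ic_triangles H k1 k2 k3 l1 l2 l3 (by simpa using ac.symm) (by simpa using bc.symm) (nz _)
      (by simpa using ad.symm) (by simpa using bd.symm) (nz _) (nw _) (nw _) wz X h1 h2

/-- The main estimate. -/
lemma ic_main {n : ℕ} (hn : 6 ≤ n) {ρ : Fin n × Fin 4 → ℝ × ℝ}
    (H : IsICPlanarDrawing (icG n) ρ) (hg : IsGridDrawing ρ) (W Z : ℝ)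
    (hW : ∀ u v, (ρ u).1 - (ρ v).1 ≤ W) (hZ : ∀ u v, (ρ u).2 - (ρ v).2 ≤ Z) :
    (n : ℝ) ≤ 100 * W ∧ (n : ℝ) ≤ 100 * Z := by
  have B := ic_planar_base H
  let Q : ℕ → ℝ × ℝ := fun i => if h : i < n then ρ (⟨i, h⟩, 0) else 0
  have hQ : ∀ i (h : i < n), Q i = ρ (⟨i, h⟩, 0) := fun i h => dif_pos h
  have hQ1 : ∀ i, ∃ z : ℤ, (Q i).1 = z := by
    intro i
    by_cases h : i < n
    · obtain ⟨a, b, e⟩ := hg (⟨i, h⟩, 0)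
      exact ⟨a, by rw [hQ i h, e]⟩
    · exact ⟨0, by simp [Q, h]⟩
  have hQ2 : ∀ i, ∃ z : ℤ, (Q i).2 = z := by
    intro i
    by_cases h : i < n
    · obtain ⟨a, b, e⟩ := hg (⟨i, h⟩, 0)
      exact ⟨b, by rw [hQ i h, e]⟩
    · exact ⟨0, by simp [Q, h]⟩
  have hQW : ∀ i < n, ∀ j < n, (Q i).1 - (Q j).1 ≤ W := by
    intro i hi j hj
    rw [hQ i hi, hQ j hj]; exact hW _ _
  have hQZ : ∀ i < n, ∀ j < n, (Q i).2 - (Q j).2 ≤ Z := by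
    intro i hi j hj
    rw [hQ i hi, hQ j hj]; exact hZ _ _
  -- the widths are at least one
  have hD : icD (Q 3) (Q 4) (Q 5) ≠ 0 := by
    rw [hQ 3 (by omega), hQ 4 (by omega), hQ 5 (by omega)]
    apply B.nondeg <;> simp [icAdj]
  have W1 : 1 ≤ W := by
    apply ic_width_one _ _ _ hD (hQ1 _) (hQ1 _) (hQ1 _) <;> apply hQW <;> omega
  have Z1 : 1 ≤ Z := by
    refine ic_width_one (Q 3).swap (Q 4).swap (Q 5).swap ?_ (hQ2 _) (hQ2 _) (hQ2 _) _ ?_ ?_ ?_ ?_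
    · intro h; apply hD
      simp only [icD, Prod.fst_swap, Prod.snd_swap] at *; linarith
    all_goals apply hQZ <;> omega
  -- the alternative
  have alt : ∀ i, 2 ≤ i → i + 4 < n →
      icIn (Q i) (Q (i + 1)) (Q (i + 2)) (Q (i + 3)) ∨
      icIn (Q (i + 4)) (Q (i + 1)) (Q (i + 2)) (Q (i + 3)) := by
    intro i h1 h2
    rw [hQ i (by omega), hQ (i + 1) (by omega), hQ (i + 2) (by omega), hQ (i + 3) (by omega),
      hQ (i + 4) (by omega)]
    apply B.hub
    all_goals first
      | (simp only [icAdj]; omega)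
      | (simp only [ne_eq, Fin.mk.injEq]; omega)
  -- the chain
  have chain : ∃ w : ℕ → ℝ × ℝ, (∀ j, ∃ z : ℤ, (w j).1 = z) ∧ (∀ j, ∃ z : ℤ, (w j).2 = z) ∧
      (∀ j < n / 2 - 3, icIn (w (j + 3)) (w j) (w (j + 1)) (w (j + 2))) ∧
      (∀ i < 3, ∀ j < 3, (w i).1 - (w j).1 ≤ W) ∧ (∀ i < 3, ∀ j < 3, (w i).2 - (w j).2 ≤ Z) := by
    by_cases h7 : n < 8
    · refine ⟨Q, hQ1, hQ2, ?_, ?_, ?_⟩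
      · intro j hj; omega
      · intro i hi j hj; apply hQW <;> omega
      · intro i hi j hj; apply hQZ <;> omega
    obtain ⟨m, hm⟩ : ∃ m, m + 1 = n / 2 := ⟨n / 2 - 1, by omega⟩
    rcases alt m (by omega) (by omega) with h | h
    · -- downwards
      refine ⟨fun j => Q (m + 3 - j), fun j => hQ1 _, fun j => hQ2 _, ?_, ?_, ?_⟩
      · intro j
        induction j with
        | zero =>
          intro _
          exact icIn_perm h
        | succ j ih =>
          intro hj
          have ih := ih (by omega)
          obtain ⟨i, hi⟩ : ∃ i, m = i + (j + 1) := ⟨m - (j + 1), by omega⟩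
          have e0 : m + 3 - j = i + 4 := by omega
          have e1 : m + 3 - (j + 1) = i + 3 := by omega
          have e2 : m + 3 - (j + 2) = i + 2 := by omega
          have e3 : m + 3 - (j + 3) = i + 1 := by omega
          have e4 : m + 3 - (j + 1 + 3) = i := by omega
          have e5 : m + 3 - (j + 1 + 1) = i + 2 := by omega
          have e6 : m + 3 - (j + 1 + 2) = i + 1 := by omega
          simp only [e0, e1, e2, e3] at ih
          simp only [e1, e4, e5, e6]
          rcases alt i (by omega) (by omega) with k | k
          · exact icIn_perm k
          · exact absurd (icIn_perm k) (icIn_not_back ih)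
      · intro i hi j hj; apply hQW <;> omega
      · intro i hi j hj; apply hQZ <;> omega
    · -- upwards
      refine ⟨fun j => Q (m + 1 + j), fun j => hQ1 _, fun j => hQ2 _, ?_, ?_, ?_⟩
      · intro j
        induction j with
        | zero =>
          intro _
          exact h
        | succ j ih =>
          intro hj
          have ih := ih (by omega)
          obtain ⟨i, hi⟩ : ∃ i, i = m + 1 + j := ⟨_, rfl⟩
          have e0 : m + 1 + j = i := by omega
          have e1 : m + 1 + (j + 1) = i + 1 := by omega
          have e2 : m + 1 + (j + 2) = i + 2 := by omega
          have e3 : m + 1 + (j + 3) = i + 3 := by omega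
          have e4 : m + 1 + (j + 1 + 3) = i + 4 := by omega
          have e5 : m + 1 + (j + 1 + 1) = i + 2 := by omega
          have e6 : m + 1 + (j + 1 + 2) = i + 3 := by omega
          simp only [e0, e1, e2, e3] at ih
          simp only [e1, e4, e5, e6]
          rcases alt i (by omega) (by omega) with k | k
          · exact absurd k (icIn_not_back ih)
          · exact k
      · intro i hi j hj; apply hQW <;> omega
      · intro i hi j hj; apply hQZ <;> omega
  obtain ⟨w, i1, i2, hin, b1, b2⟩ := chain
  have c1 := ic_chain w _ i1 hin W b1
  have c2 := ic_chain (fun j => (w j).swap) _ i2 (fun j hj => icIn_swap (hin j hj)) Z b2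
  have hnn : n ≤ 20 * (2 * ((n / 2 - 3) / 3)) + 80 := by omega
  have hnn' : (n : ℝ) ≤ 20 * (2 * (((n / 2 - 3) / 3 : ℕ) : ℝ)) + 80 := by exact_mod_cast hnn
  constructor <;> linarith

/-- Quadratic area is worst-case optimal for IC-planar straight-line
grid drawings: there is a constant `c > 0` such that for every `n ≥ 6` there is a graph
with between `n` and `4n` vertices admitting an IC-planar straight-line drawing, all of
whose IC-planar straight-line grid drawings have bounding box of area at least `c·n²`. -/
theorem icplanar_grid_drawing_quadratic_area_lower_bound :
    ∃ c : ℝ, 0 < c ∧ ∀ n : ℕ, 6 ≤ n →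
      ∃ (V : Type) (inst : Fintype V) (G : SimpleGraph V),
        n ≤ @Fintype.card V inst ∧ @Fintype.card V inst ≤ 4 * n ∧
        (∃ ρ : V → ℝ × ℝ, IsICPlanarDrawing G ρ) ∧
        ∀ ρ : V → ℝ × ℝ, IsICPlanarDrawing G ρ → IsGridDrawing ρ →
          c * (n : ℝ) ^ 2 ≤
            (sSup (Set.range fun v => (ρ v).1) - sInf (Set.range fun v => (ρ v).1)) *
            (sSup (Set.range fun v => (ρ v).2) - sInf (Set.range fun v => (ρ v).2)) := by
  refine ⟨1 / 10000, by norm_num, ?_⟩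
  intro n hn
  refine ⟨Fin n × Fin 4, inferInstance, icG n, ?_, ?_, ⟨_, icG_drawing n⟩, ?_⟩
  · simp only [Fintype.card_prod, Fintype.card_fin]; omega
  · simp only [Fintype.card_prod, Fintype.card_fin]; omega
  intro ρ H hg
  have hb : ∀ f : Fin n × Fin 4 → ℝ, ∀ u v,
      f u - f v ≤ sSup (Set.range f) - sInf (Set.range f) := by
    intro f u v
    have h1 := le_csSup (Set.finite_range f).bddAbove ⟨u, rfl⟩
    have h2 := csInf_le (Set.finite_range f).bddBelow ⟨v, rfl⟩
    linarith
  obtain ⟨h1, h2⟩ := ic_main hn H hg _ _ (hb fun v => (ρ v).1) (hb fun v => (ρ v).2)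
  have hn0 : (0 : ℝ) ≤ n := Nat.cast_nonneg n
  have := mul_le_mul h1 h2 hn0 (hn0.trans h1)
  nlinarith
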